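/- arXiv:2103.08906 — 7 statements merged into one kernel-verified Lean document; each statement's English description precedes it below -/
import Mathlib

section
/- Let X be a closed algebraic subset of ℂⁿ (the common zero locus of a family of polynomials in n complex variables) and let f : ℂⁿ → ℂ be a polynomial function. Then either the image f(X) is a finite subset of ℂ, or the complement ℂ \ f(X) is a finite subset of ℂ. -/
/-!
The polynomial `f` corresponds to the `ℂ`-algebra map `φ : ℂ[T] → ℂ[X₁, …, Xₙ]`, `T ↦ f`, which is
of finite presentation. By Chevalley's theorem, the image under `Spec φ` of the closed set cut out
by `P` is a constructible subset of `Spec ℂ[T]`. By the Nullstellensatz, the closed points of this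
image are exactly the values of `f` on the zero locus of `P`
(`closedPoint_mem_image_zeroLocus_iff`). A nonzero polynomial in one variable has finitely many
roots, so the closed points of an open subset of `Spec ℂ[T]` are finite or cofinite in `ℂ`; this
property is stable under unions and complements, hence holds for every constructible subset
(`finite_or_compl_finite_of_isConstructible`).
-/

open Polynomial in
/-- The point `(T - c)` of `Spec ℂ[T]`, encoded as the kernel of evaluation at `c`. -/
noncomputable def closedPoint (c : ℂ) : PrimeSpectrum ℂ[X] :=
  PrimeSpectrum.comap (Polynomial.evalRingHom c) ⊥

theorem mem_closedPoint_iff (c : ℂ) (g : Polynomial ℂ) :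
    g ∈ (closedPoint c).asIdeal ↔ g.eval c = 0 := by
  simp [closedPoint, PrimeSpectrum.comap_asIdeal, Ideal.mem_comap]

theorem finite_or_compl_finite_of_isConstructible {Z : Set (PrimeSpectrum (Polynomial ℂ))}
    (hZ : Topology.IsConstructible Z) :
    {c | closedPoint c ∈ Z}.Finite ∨ {c | closedPoint c ∈ Z}ᶜ.Finite := by
  induction hZ using Topology.IsConstructible.empty_union_induction with
  | open_retrocompact U hU _ =>
    obtain ⟨s, hs⟩ := (PrimeSpectrum.isOpen_iff U).1 hU
    have key (c : ℂ) : closedPoint c ∉ U ↔ ∀ g ∈ s, g.eval c = 0 := by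
      rw [← Set.mem_compl_iff, hs, PrimeSpectrum.mem_zeroLocus]
      simp only [← mem_closedPoint_iff]
      rfl
    by_cases h : ∃ g ∈ s, g ≠ 0
    · obtain ⟨g, hgs, hg⟩ := h
      exact .inr ((Polynomial.finite_setOfPred_isRoot hg).subset fun c hc ↦ (key c).1 hc g hgs)
    · push Not at h
      refine .inl (Set.finite_empty.subset fun c hc ↦ (key c).2 (fun g hg ↦ ?_) hc)
      simp [h g hg]
  | union s _ t _ hs ht =>
    change ({c | closedPoint c ∈ s} ∪ {c | closedPoint c ∈ t}).Finite ∨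
      ({c | closedPoint c ∈ s} ∪ {c | closedPoint c ∈ t})ᶜ.Finite
    rw [Set.compl_union]
    rcases hs with hs | hs
    · rcases ht with ht | ht
      · exact .inl (hs.union ht)
      · exact .inr (ht.subset Set.inter_subset_right)
    · exact .inr (hs.subset Set.inter_subset_left)
  | compl s _ hs =>
    change {c | closedPoint c ∈ s}ᶜ.Finite ∨ {c | closedPoint c ∈ s}ᶜᶜ.Finite
    rw [compl_compl]
    exact hs.symm

/-- The closed points of the image of the closed subscheme cut out by `P` under `Spec φ`, where
`φ` sends the variable to `f`, are the values of `f` at the common zeros of `P`. -/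
theorem closedPoint_mem_image_zeroLocus_iff {n : ℕ} (P : Set (MvPolynomial (Fin n) ℂ))
    (f : MvPolynomial (Fin n) ℂ) (c : ℂ) :
    closedPoint c ∈ PrimeSpectrum.comap (Polynomial.aeval (R := ℂ) f).toRingHom ''
        PrimeSpectrum.zeroLocus P ↔
      c ∈ (fun x => MvPolynomial.eval x f) ''
        {x : Fin n → ℂ | ∀ p ∈ P, MvPolynomial.eval x p = 0} := by
  constructor
  · rintro ⟨q, hq, hqc⟩
    have hf : f - MvPolynomial.C c ∈ q.asIdeal := by
      have h : (Polynomial.X - Polynomial.C c) ∈ (closedPoint c).asIdeal := by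
        simp [mem_closedPoint_iff]
      rw [← hqc, PrimeSpectrum.comap_asIdeal, Ideal.mem_comap] at h
      simpa [MvPolynomial.algebraMap_eq] using h
    have hne : (MvPolynomial.zeroLocus ℂ q.asIdeal).Nonempty := by
      rw [Set.nonempty_iff_ne_empty]
      intro h
      have h' := MvPolynomial.IsPrime.vanishingIdeal_zeroLocus (K := ℂ) q.asIdeal
      rw [h, MvPolynomial.vanishingIdeal_empty] at h'
      exact q.isPrime.ne_top h'.symm
    obtain ⟨x, hx⟩ := hne
    have hx' : ∀ p ∈ q.asIdeal, MvPolynomial.eval x p = 0 := fun p hp ↦ by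
      simpa [MvPolynomial.coe_aeval_eq_eval] using hx p hp
    refine ⟨x, fun p hp ↦ hx' p (hq hp), ?_⟩
    simpa [sub_eq_zero] using hx' _ hf
  · rintro ⟨x, hx, rfl⟩
    refine ⟨PrimeSpectrum.comap (MvPolynomial.eval x) ⊥, fun p hp ↦ ?_, ?_⟩
    · simpa [PrimeSpectrum.comap_asIdeal, Ideal.mem_comap] using hx p hp
    · rw [closedPoint, ← PrimeSpectrum.comap_comp_apply]
      congr 1
      ext <;> simp

/-- Let `X` be a closed algebraic subset of `ℂⁿ` (the common zero locus of a
family of polynomials) and `f` a polynomial function on `ℂⁿ`. Then either the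
image `f(X)` is finite, or its complement in `ℂ` is finite. -/
theorem image_of_algebraic_set_finite_or_cofinite
    (n : ℕ) (P : Set (MvPolynomial (Fin n) ℂ)) (f : MvPolynomial (Fin n) ℂ) :
    ((fun x => MvPolynomial.eval x f) ''
        {x : Fin n → ℂ | ∀ p ∈ P, MvPolynomial.eval x p = 0}).Finite ∨
    ((fun x => MvPolynomial.eval x f) ''
        {x : Fin n → ℂ | ∀ p ∈ P, MvPolynomial.eval x p = 0})ᶜ.Finite := by
  have hfp : (Polynomial.aeval (R := ℂ) f).toRingHom.FinitePresentation := by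
    refine RingHom.FinitePresentation.of_finiteType.1
      (RingHom.FiniteType.of_comp_finiteType (f := Polynomial.C) ?_)
    have h : (Polynomial.aeval (R := ℂ) f).toRingHom.comp Polynomial.C
        = algebraMap ℂ (MvPolynomial (Fin n) ℂ) := by
      ext; simp
    rw [h, RingHom.finiteType_algebraMap]
    infer_instance
  have hcl : Topology.IsConstructible (PrimeSpectrum.zeroLocus P) := by
    rw [← Topology.isConstructible_compl]
    have hopen := (PrimeSpectrum.isClosed_zeroLocus P).isOpen_compl
    exact IsRetrocompact.isConstructible
      hopen
      (fun _ _ _ ↦ TopologicalSpace.NoetherianSpace.isCompact _)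
  have h := finite_or_compl_finite_of_isConstructible
    (PrimeSpectrum.isConstructible_comap_image hfp hcl)
  simpa only [closedPoint_mem_image_zeroLocus_iff, Set.ofPred_mem_eq] using h
end

section
/- Let m₁, m₂, m₃, m₄ be nonzero real masses and let 𝒜 ⊆ ℂ¹⁴ be the solution set of the normalized central configuration system. Define on ℂ¹⁴ the polynomial functions U = Σ_{1≤j<k≤4} m_j m_k δ_{jk}, I = Σ_{k=1}^{4} m_k (x_k² + y_k²), and S = Σ_{1≤j<k≤4} m_j m_k ((x_j − x_k)² + (y_j − y_k)²). Then each of the images U(𝒜), I(𝒜) and S(𝒜) is a finite subset of ℂ. -/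
/-!
The potential is constant along the solution set `𝒜`, by an algebraic form of Sard's lemma.

The equations read `m_k q_k = ∂U/∂q_k`, so `dU = dI / 2` along `𝒜`, while pairing them with the
positions gives `I = -U`. Hence `dU = 0`: every derivation over `ℂ` of a field in which the
equations hold kills `U` (`IsCentral.deriv_potential_eq_zero`).

The ideal of `𝒜` has finitely many minimal primes `p`. Over `ℂ`, an element of a finitely
generated field extension that is killed by all derivations is algebraic
(`exists_derivation_ne_zero`), hence lies in `ℂ`. Applied to the function field of the component
given by `p`, this shows that `U` is constant on that component, so `U` takes finitely many values
(`finite_image_of_derivation`). The claims for `I` and `S` follow from `I = -U` and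
`S = (Σ m_k) I` (`IsCentral.inertia_eq_neg_potential`, `IsCentral.sum_sq_dist_eq`).
-/

open Finset in
/-- The normalized central configuration system for four bodies with masses `m`:
unknowns are `x k, y k` (positions) for `k = 1,…,4` and the symmetric array
`δ j k` (inverse distances), all complex. -/
def IsNCC (m : Fin 4 → ℝ) (x y : Fin 4 → ℂ) (δ : Fin 4 → Fin 4 → ℂ) : Prop :=
  (∀ j k, δ j k = δ k j) ∧
  (∀ k, x k = ∑ j ∈ univ.filter (fun j => j ≠ k), (m j : ℂ) * (δ j k) ^ 3 * (x j - x k)) ∧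
  (∀ k, y k = ∑ j ∈ univ.filter (fun j => j ≠ k), (m j : ℂ) * (δ j k) ^ 3 * (y j - y k)) ∧
  (∀ j k, j ≠ k → (δ j k) ^ 2 * ((x j - x k) ^ 2 + (y j - y k) ^ 2) = 1) ∧
  y 1 - y 0 = 0

/-- The solution set `𝒜` of the normalized central configuration system,
viewed inside `ℂ⁴ × ℂ⁴ × ℂ^{4×4}` (a copy of `ℂ¹⁴` after symmetry of `δ`). -/
def NCCSet (m : Fin 4 → ℝ) : Set ((Fin 4 → ℂ) × (Fin 4 → ℂ) × (Fin 4 → Fin 4 → ℂ)) :=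
  {p | IsNCC m p.1 p.2.1 p.2.2}


/-! ### Derivations and finiteness of values -/

open TensorProduct Polynomial in
/-- In characteristic zero, a transcendental element `f` is detected by a derivation. The extension
`L / k[f]` is formally smooth, so `L ⊗ Ω[k[f]/k] → Ω[L/k]` is injective and `df ≠ 0`. -/
theorem exists_derivation_ne_zero {k L : Type} [Field k] [CharZero k] [Field L] [Algebra k L]
    [Algebra.EssFiniteType k L] {f : L} (hf : Transcendental k f) :
    ∃ d : Derivation k L L, d f ≠ 0 := by
  let : Algebra k[X] L := (aeval f).toAlgebra
  have : IsScalarTower k k[X] L := .of_algebraMap_eq' (aeval f).comp_algebraMap.symm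
  have : FaithfulSMul k[X] L :=
    (faithfulSMul_iff_algebraMap_injective _ _).2 (transcendental_iff_injective.1 hf)
  let := FractionRing.liftAlgebra k[X] L
  have := FractionRing.isScalarTower_liftAlgebra k[X] L
  have : IsScalarTower k (FractionRing k[X]) L := .to₁₃₄ k k[X] (FractionRing k[X]) L
  have : Algebra.EssFiniteType (FractionRing k[X]) L := .of_comp k _ _
  have : CharZero (FractionRing k[X]) := charZero_of_injective_algebraMap
    (algebraMap k (FractionRing k[X])).injective
  have : Algebra.FormallySmooth k[X] (FractionRing k[X]) := .of_isLocalization (nonZeroDivisors _)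
  have : Algebra.FormallySmooth k[X] L := .comp _ (FractionRing k[X]) _
  have hinj : Function.Injective (KaehlerDifferential.mapBaseChange k k[X] L) := by
    rw [injective_iff_map_eq_zero]
    intro x hx
    obtain ⟨x, rfl⟩ := (Algebra.H1Cotangent.exact_δ_mapBaseChange k k[X] L x).mp hx
    rw [Subsingleton.elim x 0, map_zero]
  have hD : KaehlerDifferential.D k L f ≠ 0 := by
    intro h
    have h1 : KaehlerDifferential.mapBaseChange k k[X] L
        (1 ⊗ₜ KaehlerDifferential.D k k[X] X) = 0 := by
      rw [KaehlerDifferential.mapBaseChange_tmul, KaehlerDifferential.map_D, one_smul]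
      have : algebraMap k[X] L X = f := aeval_X f
      rw [this, h]
    have h2 := (injective_iff_map_eq_zero _).1 hinj _ h1
    -- `Ω[k[X]/k]` is free on `dX`, so `1 ⊗ dX` corresponds to `1 : L`.
    have h3 := congrArg (TensorProduct.rid k[X] L ∘
      LinearMap.lTensor L (KaehlerDifferential.polynomialEquiv k).toLinearMap) h2
    simp at h3
  by_contra! hd
  refine hD ((Module.forall_dual_apply_eq_zero_iff L _).1 fun φ => ?_)
  exact hd (φ.compDer (KaehlerDifferential.D k L))

/-- An algebraic form of Sard's lemma. If every derivation kills the value of the polynomial `f`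
at every point `a`, over any field extension `L` of `ℂ`, of the Zariski closure of `Z`, then `f`
takes finitely many values on `Z`. -/
theorem finite_image_of_derivation {σ : Type} [Finite σ] (Z : Set (σ → ℂ)) (f : MvPolynomial σ ℂ)
    (h : ∀ (L : Type) [Field L] [Algebra ℂ L] (a : σ → L),
      (∀ p : MvPolynomial σ ℂ, (∀ z ∈ Z, MvPolynomial.eval z p = 0) → MvPolynomial.aeval a p = 0) →
      ∀ d : Derivation ℂ L L, d (MvPolynomial.aeval a f) = 0) :
    ((fun z => MvPolynomial.eval z f) '' Z).Finite := by
  let J := MvPolynomial.vanishingIdeal ℂ Z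
  have key : ∀ p ∈ J.minimalPrimes, ∃ c : ℂ, f - MvPolynomial.C c ∈ p := by
    intro p hp
    have : p.IsPrime := hp.1.1
    let R := MvPolynomial σ ℂ ⧸ p
    -- The function field of the component; the classes of the variables are its generic point.
    let L := FractionRing R
    let g : MvPolynomial σ ℂ →ₐ[ℂ] L := (IsScalarTower.toAlgHom ℂ R L).comp (Ideal.Quotient.mkₐ ℂ p)
    have hg : ∀ q, g q = 0 ↔ q ∈ p := fun q => by
      rw [← Ideal.Quotient.eq_zero_iff_mem]
      exact map_eq_zero_iff (algebraMap R L) (IsFractionRing.injective R L)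
    have hga : ∀ q, MvPolynomial.aeval (fun i => g (MvPolynomial.X i)) q = g q := fun q =>
      (DFunLike.congr_fun (MvPolynomial.aeval_unique g) q).symm
    have hder := h L (fun i => g (MvPolynomial.X i)) fun q hq => by
      rw [hga, hg]
      exact hp.1.2 (MvPolynomial.mem_vanishingIdeal_iff.2 hq)
    rw [hga] at hder
    have halg : IsAlgebraic ℂ (g f) := by
      by_contra hn
      obtain ⟨d, hd⟩ := exists_derivation_ne_zero hn
      exact hd (hder d)
    obtain ⟨c, hc⟩ := halg.isIntegral.mem_range_algebraMap_of_minpoly_splits (K := ℂ)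
      (IsAlgClosed.splits _)
    refine ⟨c, (hg _).1 ?_⟩
    rw [map_sub, ← hc, sub_eq_zero]
    exact (g.commutes c).symm
  choose! c hc using key
  refine ((Ideal.finite_minimalPrimes_of_isNoetherianRing _ J).image c).subset ?_
  rintro _ ⟨z, hz, rfl⟩
  have : (RingHom.ker (MvPolynomial.eval z)).IsPrime := RingHom.ker_isPrime _
  obtain ⟨p, hp, hpz⟩ := Ideal.exists_minimalPrimes_le (I := J)
    (J := RingHom.ker (MvPolynomial.eval z))
    (fun q hq => MvPolynomial.mem_vanishingIdeal_iff.1 hq z hz)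
  refine ⟨p, hp, ?_⟩
  have := hpz (hc p hp)
  rw [RingHom.mem_ker, map_sub, MvPolynomial.eval_C, sub_eq_zero] at this
  exact this.symm

section

open Finset

/-! ### The equations over a field extension of `ℂ` -/

/-- The normalized central configuration equations over a field `L`, with masses `M` in `L`.
The normalization `y₂ = y₁` is left out. -/
structure IsCentral {L : Type} [Field L] (M x y : Fin 4 → L) (δ : Fin 4 → Fin 4 → L) :
    Prop where
  symm : ∀ j k, δ j k = δ k j
  eqx : ∀ k, x k = ∑ j ∈ univ.filter (fun j => j ≠ k), M j * (δ j k) ^ 3 * (x j - x k)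
  eqy : ∀ k, y k = ∑ j ∈ univ.filter (fun j => j ≠ k), M j * (δ j k) ^ 3 * (y j - y k)
  dist : ∀ j k, j ≠ k → (δ j k) ^ 2 * ((x j - x k) ^ 2 + (y j - y k) ^ 2) = 1

/-- The potential `U = Σ_{j<k} m_j m_k δ_{jk}`. -/
def potential {L : Type} [Field L] (M : Fin 4 → L) (δ : Fin 4 → Fin 4 → L) : L :=
  ∑ j ∈ univ, ∑ k ∈ univ.filter (fun k => j < k), M j * M k * δ j k

/-- The moment of inertia `I = Σ_k m_k (x_k² + y_k²)`. -/
def inertia {L : Type} [Field L] (M x y : Fin 4 → L) : L :=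
  ∑ k ∈ univ, M k * ((x k) ^ 2 + (y k) ^ 2)

namespace IsCentral

variable {L : Type} [Field L] {M x y : Fin 4 → L} {δ : Fin 4 → Fin 4 → L}

/-- The component equation for a coordinate `x`, with the sums written out and each pair of
bodies represented by `δ j k`, `j < k`. -/
theorem expand (hδ : ∀ j k, δ j k = δ k j)
    (hx : ∀ k, x k = ∑ j ∈ univ.filter (fun j => j ≠ k), M j * (δ j k) ^ 3 * (x j - x k)) :
    x 0 = M 1 * δ 0 1 ^ 3 * (x 1 - x 0) + M 2 * δ 0 2 ^ 3 * (x 2 - x 0)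
      + M 3 * δ 0 3 ^ 3 * (x 3 - x 0) ∧
    x 1 = M 0 * δ 0 1 ^ 3 * (x 0 - x 1) + M 2 * δ 1 2 ^ 3 * (x 2 - x 1)
      + M 3 * δ 1 3 ^ 3 * (x 3 - x 1) ∧
    x 2 = M 0 * δ 0 2 ^ 3 * (x 0 - x 2) + M 1 * δ 1 2 ^ 3 * (x 1 - x 2)
      + M 3 * δ 2 3 ^ 3 * (x 3 - x 2) ∧
    x 3 = M 0 * δ 0 3 ^ 3 * (x 0 - x 3) + M 1 * δ 1 3 ^ 3 * (x 1 - x 3)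
      + M 2 * δ 2 3 ^ 3 * (x 2 - x 3) := by
  simp only [Finset.sum_filter, Fin.sum_univ_four] at hx
  have x0 := hx 0
  have x1 := hx 1
  have x2 := hx 2
  have x3 := hx 3
  simp only [hδ 1 0, hδ 2 0, hδ 3 0, hδ 2 1, hδ 3 1, hδ 3 2] at x0 x1 x2 x3
  refine ⟨?_, ?_, ?_, ?_⟩
  · simpa using x0
  · simpa using x1
  · simpa using x2
  · simpa using x3

theorem potential_eq (M : Fin 4 → L) (δ : Fin 4 → Fin 4 → L) :
    potential M δ = M 0 * M 1 * δ 0 1 + M 0 * M 2 * δ 0 2 + M 0 * M 3 * δ 0 3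
      + M 1 * M 2 * δ 1 2 + M 1 * M 3 * δ 1 3 + M 2 * M 3 * δ 2 3 := by
  simp only [potential, Finset.sum_filter, Fin.sum_univ_four]
  simp [Fin.lt_def]
  ring

/-- Pairing the equations with the positions and using `δ³ r² = δ` gives `I = -U`. -/
theorem inertia_eq_neg_potential (h : IsCentral M x y δ) :
    inertia M x y = -potential M δ := by
  obtain ⟨x0, x1, x2, x3⟩ := expand h.symm h.eqx
  obtain ⟨y0, y1, y2, y3⟩ := expand h.symm h.eqy
  have e01 := h.dist 0 1 (by decide)
  have e02 := h.dist 0 2 (by decide)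
  have e03 := h.dist 0 3 (by decide)
  have e12 := h.dist 1 2 (by decide)
  have e13 := h.dist 1 3 (by decide)
  have e23 := h.dist 2 3 (by decide)
  rw [potential_eq, inertia, Fin.sum_univ_four]
  linear_combination M 0 * (x 0 * x0 + y 0 * y0) + M 1 * (x 1 * x1 + y 1 * y1)
    + M 2 * (x 2 * x2 + y 2 * y2) + M 3 * (x 3 * x3 + y 3 * y3)
    - M 0 * M 1 * δ 0 1 * e01 - M 0 * M 2 * δ 0 2 * e02 - M 0 * M 3 * δ 0 3 * e03
    - M 1 * M 2 * δ 1 2 * e12 - M 1 * M 3 * δ 1 3 * e13 - M 2 * M 3 * δ 2 3 * e23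

/-- Lagrange's identity `S = (Σ m_k) I - |Σ m_k q_k|²`, where the center of mass vanishes because
the forces are antisymmetric. -/
theorem sum_sq_dist_eq (h : IsCentral M x y δ) :
    ∑ j ∈ univ, ∑ k ∈ univ.filter (fun k => j < k),
      M j * M k * ((x j - x k) ^ 2 + (y j - y k) ^ 2) = (∑ k, M k) * inertia M x y := by
  obtain ⟨x0, x1, x2, x3⟩ := expand h.symm h.eqx
  obtain ⟨y0, y1, y2, y3⟩ := expand h.symm h.eqy
  have cx : M 0 * x 0 + M 1 * x 1 + M 2 * x 2 + M 3 * x 3 = 0 := by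
    linear_combination M 0 * x0 + M 1 * x1 + M 2 * x2 + M 3 * x3
  have cy : M 0 * y 0 + M 1 * y 1 + M 2 * y 2 + M 3 * y 3 = 0 := by
    linear_combination M 0 * y0 + M 1 * y1 + M 2 * y2 + M 3 * y3
  simp only [inertia, Finset.sum_filter, Fin.sum_univ_four]
  simp [Fin.lt_def]
  linear_combination -(M 0 * x 0 + M 1 * x 1 + M 2 * x 2 + M 3 * x 3) * cx
    - (M 0 * y 0 + M 1 * y 1 + M 2 * y 2 + M 3 * y 3) * cy

/-- `δ` is a local inverse square root of `r²`, so `dδ = -δ³ d(r²) / 2`. -/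
theorem deriv_dist [Algebra ℂ L] (h : IsCentral M x y δ) (d : Derivation ℂ L L) {j k : Fin 4}
    (hjk : j ≠ k) :
    d (δ j k) = -(δ j k) ^ 3 *
      ((x j - x k) * (d (x j) - d (x k)) + (y j - y k) * (d (y j) - d (y k))) := by
  have : CharZero L := charZero_of_injective_algebraMap (algebraMap ℂ L).injective
  have h1 := h.dist j k hjk
  have h2 := congrArg d h1
  simp only [Derivation.leibniz, Derivation.leibniz_pow, map_add, map_sub, smul_eq_mul,
    nsmul_eq_mul, Derivation.map_one_eq_zero] at h2
  push_cast at h2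
  apply mul_left_cancel₀ (two_ne_zero (α := L))
  linear_combination (δ j k) * h2 - 2 * d (δ j k) * h1

/-- The equations say `m_k q_k = ∂U/∂q_k`, so `dU = dI / 2`; together with `I = -U` this
forces `dU = 0`. -/
theorem deriv_potential_eq_zero [Algebra ℂ L] (h : IsCentral M x y δ) (d : Derivation ℂ L L)
    (hM : ∀ k, d (M k) = 0) : d (potential M δ) = 0 := by
  have : CharZero L := charZero_of_injective_algebraMap (algebraMap ℂ L).injective
  obtain ⟨x0, x1, x2, x3⟩ := expand h.symm h.eqx
  obtain ⟨y0, y1, y2, y3⟩ := expand h.symm h.eqy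
  have f01 := h.deriv_dist d (j := 0) (k := 1) (by decide)
  have f02 := h.deriv_dist d (j := 0) (k := 2) (by decide)
  have f03 := h.deriv_dist d (j := 0) (k := 3) (by decide)
  have f12 := h.deriv_dist d (j := 1) (k := 2) (by decide)
  have f13 := h.deriv_dist d (j := 1) (k := 3) (by decide)
  have f23 := h.deriv_dist d (j := 2) (k := 3) (by decide)
  have hU : d (potential M δ) = M 0 * (x 0 * d (x 0) + y 0 * d (y 0))
      + M 1 * (x 1 * d (x 1) + y 1 * d (y 1)) + M 2 * (x 2 * d (x 2) + y 2 * d (y 2))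
      + M 3 * (x 3 * d (x 3) + y 3 * d (y 3)) := by
    rw [potential_eq]
    simp only [Derivation.leibniz, map_add, smul_eq_mul, hM]
    linear_combination M 0 * M 1 * f01 + M 0 * M 2 * f02 + M 0 * M 3 * f03 + M 1 * M 2 * f12
      + M 1 * M 3 * f13 + M 2 * M 3 * f23
      - M 0 * (d (x 0) * x0 + d (y 0) * y0) - M 1 * (d (x 1) * x1 + d (y 1) * y1)
      - M 2 * (d (x 2) * x2 + d (y 2) * y2) - M 3 * (d (x 3) * x3 + d (y 3) * y3)
  have hI := congrArg d h.inertia_eq_neg_potential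
  rw [inertia, Fin.sum_univ_four, map_neg] at hI
  simp only [Derivation.leibniz, Derivation.leibniz_pow, map_add, smul_eq_mul, nsmul_eq_mul,
    hM] at hI
  push_cast at hI
  apply mul_left_cancel₀ (three_ne_zero (α := L))
  linear_combination 2 * hU + hI

end IsCentral

/-! ### Finiteness of the values of `U`, `I` and `S` -/

theorem IsNCC.isCentral {m : Fin 4 → ℝ} {x y : Fin 4 → ℂ} {δ : Fin 4 → Fin 4 → ℂ}
    (h : IsNCC m x y δ) : IsCentral (fun k => (m k : ℂ)) x y δ :=
  ⟨h.1, h.2.1, h.2.2.1, h.2.2.2.1⟩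

/-- Index set for the coordinates `x_k`, `y_k` and `δ_{jk}`, in this order. -/
abbrev Coord : Type := Fin 4 ⊕ Fin 4 ⊕ (Fin 4 × Fin 4)

/-- A configuration as a point of affine space with coordinates indexed by `Coord`. -/
def toPoint (p : (Fin 4 → ℂ) × (Fin 4 → ℂ) × (Fin 4 → Fin 4 → ℂ)) : Coord → ℂ :=
  Sum.elim p.1 (Sum.elim p.2.1 fun jk => p.2.2 jk.1 jk.2)

open MvPolynomial in
/-- The equations persist at any point, over a field extension, of the Zariski closure of `𝒜`. -/
theorem isCentral_of_generic {m : Fin 4 → ℝ} {L : Type} [Field L] [Algebra ℂ L] {a : Coord → L}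
    (ha : ∀ p : MvPolynomial Coord ℂ, (∀ z ∈ toPoint '' NCCSet m, eval z p = 0) → aeval a p = 0) :
    IsCentral (fun k => algebraMap ℂ L (m k)) (fun k => a (.inl k)) (fun k => a (.inr (.inl k)))
      (fun j k => a (.inr (.inr (j, k)))) := by
  let X' : Fin 4 → MvPolynomial Coord ℂ := fun k => X (.inl k)
  let Y' : Fin 4 → MvPolynomial Coord ℂ := fun k => X (.inr (.inl k))
  let D' : Fin 4 → Fin 4 → MvPolynomial Coord ℂ := fun j k => X (.inr (.inr (j, k)))
  refine ⟨fun j k => ?_, fun k => ?_, fun k => ?_, fun j k hjk => ?_⟩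
  · have := ha (D' j k - D' k j) (by
      rintro _ ⟨z, hz, rfl⟩
      simpa [D', toPoint, sub_eq_zero] using hz.1 j k)
    simpa [D', sub_eq_zero] using this
  · have := ha (X' k - ∑ j ∈ univ.filter (fun j => j ≠ k),
      C (m j : ℂ) * (D' j k) ^ 3 * (X' j - X' k))
      (by
      rintro _ ⟨z, hz, rfl⟩
      simpa only [X', D', toPoint, map_sub, map_sum, map_mul, map_pow, eval_X, eval_C, sub_eq_zero,
        Sum.elim_inl, Sum.elim_inr] using hz.2.1 k)
    simpa only [X', D', map_sub, map_sum, map_mul, map_pow, aeval_X, aeval_C, sub_eq_zero]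
      using this
  · have := ha (Y' k - ∑ j ∈ univ.filter (fun j => j ≠ k),
      C (m j : ℂ) * (D' j k) ^ 3 * (Y' j - Y' k))
      (by
      rintro _ ⟨z, hz, rfl⟩
      simpa only [Y', D', toPoint, map_sub, map_sum, map_mul, map_pow, eval_X, eval_C, sub_eq_zero,
        Sum.elim_inl, Sum.elim_inr] using hz.2.2.1 k)
    simpa only [Y', D', map_sub, map_sum, map_mul, map_pow, aeval_X, aeval_C, sub_eq_zero]
      using this
  · have := ha ((D' j k) ^ 2 * ((X' j - X' k) ^ 2 + (Y' j - Y' k) ^ 2) - 1) (by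
      rintro _ ⟨z, hz, rfl⟩
      simpa [X', Y', D', toPoint, sub_eq_zero] using hz.2.2.2.1 j k hjk)
    simpa [X', Y', D', sub_eq_zero] using this

open MvPolynomial in
theorem finite_potential (m : Fin 4 → ℝ) :
    ((fun p : (Fin 4 → ℂ) × (Fin 4 → ℂ) × (Fin 4 → Fin 4 → ℂ) =>
      potential (fun k => (m k : ℂ)) p.2.2) '' NCCSet m).Finite := by
  let f : MvPolynomial Coord ℂ := ∑ j ∈ univ, ∑ k ∈ univ.filter (fun k => j < k),
    C (m j : ℂ) * C (m k : ℂ) * X (.inr (.inr (j, k)))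
  have := finite_image_of_derivation (toPoint '' NCCSet m) f fun L _ _ a ha d => by
    have hd := (isCentral_of_generic ha).deriv_potential_eq_zero d fun k => d.map_algebraMap _
    simpa only [f, potential, map_sum, map_mul, aeval_X, aeval_C] using hd
  rw [Set.image_image] at this
  convert this using 3
  simp [f, potential, toPoint]

end

open Finset in
/-- The potential `U`, the moment of inertia `I` and `S = Σ m_j m_k r_{jk}²`
take only finitely many values on the solution set of the normalized central
configuration system. -/
theorem finite_values_of_U_I_S (m : Fin 4 → ℝ) (hm : ∀ k, m k ≠ 0) :
    ((fun p : (Fin 4 → ℂ) × (Fin 4 → ℂ) × (Fin 4 → Fin 4 → ℂ) =>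
        ∑ j ∈ univ, ∑ k ∈ univ.filter (fun k => j < k),
          (m j : ℂ) * (m k : ℂ) * p.2.2 j k) '' NCCSet m).Finite ∧
    ((fun p : (Fin 4 → ℂ) × (Fin 4 → ℂ) × (Fin 4 → Fin 4 → ℂ) =>
        ∑ k ∈ univ, (m k : ℂ) * ((p.1 k) ^ 2 + (p.2.1 k) ^ 2)) '' NCCSet m).Finite ∧
    ((fun p : (Fin 4 → ℂ) × (Fin 4 → ℂ) × (Fin 4 → Fin 4 → ℂ) =>
        ∑ j ∈ univ, ∑ k ∈ univ.filter (fun k => j < k),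
          (m j : ℂ) * (m k : ℂ) *
            ((p.1 j - p.1 k) ^ 2 + (p.2.1 j - p.2.1 k) ^ 2)) '' NCCSet m).Finite := by
  have hU := finite_potential m
  have hI : ((fun p : (Fin 4 → ℂ) × (Fin 4 → ℂ) × (Fin 4 → Fin 4 → ℂ) =>
      inertia (fun k => (m k : ℂ)) p.1 p.2.1) '' NCCSet m).Finite := by
    refine (hU.image fun u => -u).subset ?_
    rintro _ ⟨p, hp, rfl⟩
    exact ⟨_, ⟨p, hp, rfl⟩, (IsNCC.isCentral hp).inertia_eq_neg_potential.symm⟩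
  refine ⟨hU, hI, (hI.image fun i => (∑ k, (m k : ℂ)) * i).subset ?_⟩
  rintro _ ⟨p, hp, rfl⟩
  exact ⟨_, ⟨p, hp, rfl⟩, (IsNCC.isCentral hp).sum_sq_dist_eq.symm⟩
end

section
/- Let α be the unique positive root of (1−α³)² − (1+α³)²(2−α²)³ = 0. Suppose the nonzero real masses satisfy either m₁ = m₂ = −m₃ = −m₄, or m₁ = m₂, m₃ = −α²·m₁ and m₄ = −(2−α²)·m₁. Then the number of real planar central configurations is finite: the set of 6-tuples of mutual distances (|r_j − r_k|)_{1 ≤ j < k ≤ 4} ranging over all 4-tuples of pairwise distinct points r₁, r₂, r₃, r₄ ∈ ℝ² satisfying σ·r_k = Σ_{j ≠ k} m_j (r_j − r_k)/|r_j − r_k|³ for k = 1, 2, 3, 4 for some σ ∈ {1, −1}, is finite. -/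
open Finset in
/-- The set of 6-tuples of mutual distances attained by planar central
configurations of four pairwise distinct bodies with multiplier `σ = ±1`. -/
def CCDistanceSet (m : Fin 4 → ℝ) : Set (Fin 4 → Fin 4 → ℝ) :=
  {d | ∃ (σ : ℝ) (r : Fin 4 → EuclideanSpace ℝ (Fin 2)),
      (σ = 1 ∨ σ = -1) ∧
      (∀ j k, j ≠ k → r j ≠ r k) ∧
      (∀ k, σ • r k = ∑ j ∈ univ.filter (fun j => j ≠ k),
          (m j / ‖r j - r k‖ ^ 3) • (r j - r k)) ∧
      (∀ j k, d j k = ‖r j - r k‖)}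

/-!
Both mass families have the form `m, m, -A m, -B m` with `A, B > 0` and `A + B = 2`, and finiteness
holds for all of these: either `A = B = 1`, or `A = α²`, where the equation for `α` forces `α² < 2`.

Since the mutual attractions cancel, the weighted sum of the equations gives `∑ mₖ rₖ = 0`. As the
total mass is zero, this says that the midpoint `c` of `r₁ r₂` divides `r₃ r₄` in a fixed ratio:
the points are `c + u, c - u, c + B w, c - A w` (`exists_diagEq`). The differences of the
equations for the two ends of each diagonal involve only `u` and `w`.

* If `u` and `w` are independent, comparing coefficients gives
  `r₁₃⁻³ + r₂₄⁻³ = r₂₃⁻³ + r₁₄⁻³`. The difference of the two sides is strictly monotone in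
  `⟪u, w⟫` and zero for `⟪u, w⟫ = 0`, so the configuration is a kite (`DiagEq.orthogonal`). The two
  remaining equations give the size in terms of `t = ‖w‖ / ‖u‖` and one algebraic equation for `t`
  (`DiagEq.kite`).
* If `w = t u`, the configuration is collinear, and again the size is a function of `t` while `t`
  solves one algebraic equation (`DiagEq.collinear`).

Each equation for `t`, cleared of radicals and absolute values, is a polynomial equation that is
nontrivial because it fails at `t = 0` (`finite_kite`, `finite_collinear`). Hence the Gram matrix of
`u, w` takes finitely many values (`finite_gram`), and it determines all the distances.
-/

/-! ### Finiteness from polynomial equations -/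

open Polynomial in
/-- A real polynomial that does not vanish at `0` has finitely many zeros. -/
lemma finite_zeros (p : ℝ[X]) (h : p.eval 0 ≠ 0) : {t : ℝ | p.eval t = 0}.Finite := by
  have hp : p ≠ 0 := by
    rintro rfl
    simp at h
  exact Polynomial.finite_setOfPred_isRoot hp

/-- If the shape parameter `t` is restricted to a finite set and the cube of the size `a` is a
function of `t` up to sign, then only finitely many pairs `(a, t)` occur. -/
lemma finite_size_shape {T : Set ℝ} (hT : T.Finite) (φ : ℝ → ℝ) :
    {q : ℝ × ℝ | q.2 ∈ T ∧ ∃ σ : ℝ, (σ = 1 ∨ σ = -1) ∧ q.1 ^ 3 = σ * φ q.2}.Finite := by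
  have hcube : Function.Injective (fun q : ℝ × ℝ => (q.1 ^ 3, q.2)) := by
    rintro ⟨a, t⟩ ⟨b, s⟩ h
    simp only [Prod.mk.injEq] at h
    have h3 : Odd 3 := by decide
    exact Prod.ext (h3.strictMono_pow.injective h.1) h.2
  have hfin : ((fun z : ℝ × ℝ => (z.1 * φ z.2, z.2)) '' (({1, -1} : Set ℝ) ×ˢ T)).Finite :=
    ((Set.toFinite _).prod hT).image _
  refine (hfin.preimage hcube.injOn).subset ?_
  rintro ⟨a, t⟩ ⟨ht, σ, hσ, h⟩
  exact ⟨(σ, t), ⟨by simpa using hσ, ht⟩, by simpa using h.symm⟩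

/-! ### The shape equations -/

/-- For a kite, eliminating the size leaves
`(1 + B² t²)^(-3/2) + (1 + A² t²)^(-3/2) = 1/8 + 1/(8 t³)` for the ratio `t` of the diagonals;
squaring twice gives a polynomial equation that fails at `t = 0`. -/
lemma finite_kite (A B : ℝ) : {t : ℝ | 0 < t ∧
    1 / √(1 + B ^ 2 * t ^ 2) ^ 3 + 1 / √(1 + A ^ 2 * t ^ 2) ^ 3 = 1 / 8 + 1 / (8 * t ^ 3)}.Finite := by
  let P : Polynomial ℝ := 1 + Polynomial.C (B ^ 2) * Polynomial.X ^ 2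
  let Q : Polynomial ℝ := 1 + Polynomial.C (A ^ 2) * Polynomial.X ^ 2
  let K : Polynomial ℝ := 1 + Polynomial.X ^ 3
  let X : Polynomial ℝ := Polynomial.X
  refine (finite_zeros ((K ^ 2 * P ^ 3 * Q ^ 3 + 64 * X ^ 6 * (Q ^ 3 - P ^ 3)) ^ 2
    - 256 * K ^ 2 * X ^ 6 * P ^ 3 * Q ^ 6) (by simp [P, Q, K, X])).subset ?_
  rintro t ⟨ht, h⟩
  simp only [Set.mem_ofPred_eq, P, Q, K, X, Polynomial.eval_add, Polynomial.eval_sub,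
    Polynomial.eval_mul, Polynomial.eval_pow, Polynomial.eval_C, Polynomial.eval_X,
    Polynomial.eval_one, Polynomial.eval_ofNat]
  have hP : 0 < 1 + B ^ 2 * t ^ 2 := by positivity
  have hQ : 0 < 1 + A ^ 2 * t ^ 2 := by positivity
  have hp2 := Real.sq_sqrt hP.le
  have hq2 := Real.sq_sqrt hQ.le
  have hp := Real.sqrt_pos.2 hP
  have hq := Real.sqrt_pos.2 hQ
  set p := √(1 + B ^ 2 * t ^ 2)
  set q := √(1 + A ^ 2 * t ^ 2)
  rw [← hp2, ← hq2]
  have h1 : (1 + t ^ 3) * p ^ 3 * q ^ 3 - 8 * t ^ 3 * q ^ 3 = 8 * t ^ 3 * p ^ 3 := by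
    field_simp at h
    linear_combination -h
  -- squaring `k p³ q³ - 8 t³ q³ = 8 t³ p³` isolates `16 k t³ p³ q⁶`, squared again below
  have h2 : (1 + t ^ 3) ^ 2 * p ^ 6 * q ^ 6 + 64 * t ^ 6 * (q ^ 6 - p ^ 6)
      = 16 * (1 + t ^ 3) * t ^ 3 * p ^ 3 * q ^ 6 := by
    linear_combination ((1 + t ^ 3) * p ^ 3 * q ^ 3 - 8 * t ^ 3 * q ^ 3 + 8 * t ^ 3 * p ^ 3) * h1
  linear_combination ((1 + t ^ 3) ^ 2 * p ^ 6 * q ^ 6 + 64 * t ^ 6 * (q ^ 6 - p ^ 6)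
      + 16 * (1 + t ^ 3) * t ^ 3 * p ^ 3 * q ^ 6) * h2

lemma exists_unit_abs (x : ℝ) : ∃ ε : ℤˣ, |x| = ((ε : ℤ) : ℝ) * x := by
  rcases abs_choice x with h | h
  · exact ⟨1, by simp [h]⟩
  · exact ⟨-1, by simp [h]⟩

/-- The equation for the ratio `t` of a collinear configuration with positions
`1, -1, B t, -A t`, once the size is eliminated. It is rational for each choice of the signs of
the five quantities inside absolute values, and its numerator does not vanish at `t = 0`. -/
lemma finite_collinear (A B : ℝ) : {t : ℝ | t ≠ 0 ∧ 1 - B * t ≠ 0 ∧ 1 - A * t ≠ 0 ∧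
    1 + B * t ≠ 0 ∧ 1 + A * t ≠ 0 ∧
    (1 - B * t) * (A * t - 1) / |1 - B * t| ^ 3 + (1 - A * t) * (B * t - 1) / |1 - A * t| ^ 3
      + (1 + B * t) * (A * t + 1) / |1 + B * t| ^ 3 + (1 + A * t) * (B * t + 1) / |1 + A * t| ^ 3
      = t / 2 + t / (2 * |t| ^ 3)}.Finite := by
  let x : Polynomial ℝ := 1 - Polynomial.C B * Polynomial.X
  let y : Polynomial ℝ := 1 - Polynomial.C A * Polynomial.X
  let z : Polynomial ℝ := 1 + Polynomial.C B * Polynomial.X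
  let w : Polynomial ℝ := 1 + Polynomial.C A * Polynomial.X
  let X : Polynomial ℝ := Polynomial.X
  let s : ℤˣ → Polynomial ℝ := fun e => Polynomial.C ((e : ℤ) : ℝ)
  let p : (Fin 5 → ℤˣ) → Polynomial ℝ := fun ε =>
    2 * X ^ 2 * (s (ε 0) * (-y) * y ^ 2 * z ^ 2 * w ^ 2 + s (ε 1) * (-x) * x ^ 2 * z ^ 2 * w ^ 2
      + s (ε 2) * w * x ^ 2 * y ^ 2 * w ^ 2 + s (ε 3) * z * x ^ 2 * y ^ 2 * z ^ 2)
      - (X ^ 3 + s (ε 4)) * x ^ 2 * y ^ 2 * z ^ 2 * w ^ 2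
  have hfin : (⋃ ε, {t : ℝ | (p ε).eval t = 0}).Finite :=
    Set.finite_iUnion fun ε => finite_zeros _ (by simp [p, x, y, z, w, X, s])
  refine hfin.subset ?_
  rintro t ⟨ht, hx, hy, hz, hw, h⟩
  obtain ⟨e0, h0⟩ := exists_unit_abs (1 - B * t)
  obtain ⟨e1, h1⟩ := exists_unit_abs (1 - A * t)
  obtain ⟨e2, h2⟩ := exists_unit_abs (1 + B * t)
  obtain ⟨e3, h3⟩ := exists_unit_abs (1 + A * t)
  obtain ⟨e4, h4⟩ := exists_unit_abs t
  rw [h0, h1, h2, h3, h4] at h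
  refine Set.mem_iUnion.2 ⟨![e0, e1, e2, e3, e4], ?_⟩
  simp only [Set.mem_ofPred_eq, p, x, y, z, w, X, s, Polynomial.eval_add, Polynomial.eval_sub,
    Polynomial.eval_mul, Polynomial.eval_pow, Polynomial.eval_C, Polynomial.eval_X,
    Polynomial.eval_one, Polynomial.eval_ofNat, Polynomial.eval_neg, Matrix.cons_val]
  have hs : ∀ e : ℤˣ, ∀ u v : ℝ, u / (((e : ℤ) : ℝ) * v) ^ 3 = ((e : ℤ) : ℝ) * u / v ^ 3 := by
    intro e u v
    rcases Int.units_eq_one_or e with rfl | rfl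
    · simp
    · simp [neg_pow, Odd.neg_one_pow (show Odd 3 by decide), div_neg, neg_div]
  have hs' : t / (2 * (((e4 : ℤ) : ℝ) * t) ^ 3) = ((e4 : ℤ) : ℝ) * (t / 2) / t ^ 3 := by
    rw [← hs, div_div]
  rw [hs, hs, hs, hs, hs'] at h
  generalize ((e0 : ℤ) : ℝ) = f0 at *
  generalize ((e1 : ℤ) : ℝ) = f1 at *
  generalize ((e2 : ℤ) : ℝ) = f2 at *
  generalize ((e3 : ℤ) : ℝ) = f3 at *
  generalize ((e4 : ℤ) : ℝ) = f4 at *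
  have key : f0 * (A * t - 1) / (1 - B * t) ^ 2 + f1 * (B * t - 1) / (1 - A * t) ^ 2
      + f2 * (A * t + 1) / (1 + B * t) ^ 2 + f3 * (B * t + 1) / (1 + A * t) ^ 2
      = t / 2 + f4 / (2 * t ^ 2) := by
    convert h using 1
    · field_simp
    · field_simp
  have hx' : 1 - t * B ≠ 0 := by rwa [mul_comm t B]
  have hz' : 1 + t * B ≠ 0 := by rwa [mul_comm t B]
  field_simp at key
  linear_combination key

/-! ### Reduction to the two diagonals -/

section Diagonals

variable {V : Type*} [NormedAddCommGroup V] [InnerProductSpace ℝ V]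

/-- The weights of the second diagonal vector in the positions `c + u, c - u, c + B w, c - A w`. -/
def diagCoeff (A B : ℝ) : Fin 4 → ℝ := ![0, 0, B, -A]

/-- The mutual distances of the points `c + u, c - u, c + B w, c - A w` in terms of the Gram matrix
`x = ⟪u, u⟫, y = ⟪w, w⟫, s = ⟪u, w⟫`. -/
noncomputable def gramDist (A B : ℝ) (g : ℝ × ℝ × ℝ) (j k : Fin 4) : ℝ :=
  let e : Fin 4 → ℝ := ![1, -1, 0, 0]
  let f := diagCoeff A B
  √((e j - e k) ^ 2 * g.1 + 2 * ((e j - e k) * (f j - f k)) * g.2.2 + (f j - f k) ^ 2 * g.2.1)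

lemma norm_comb (u w : V) (a b : ℝ) : ‖a • u + b • w‖ =
    √(a ^ 2 * ‖u‖ ^ 2 + 2 * (a * b) * inner ℝ u w + b ^ 2 * ‖w‖ ^ 2) := by
  rw [← Real.sqrt_sq (norm_nonneg (a • u + b • w)), norm_add_sq_real, norm_smul, norm_smul,
    inner_smul_left, inner_smul_right]
  congr 1
  simp only [Real.norm_eq_abs, mul_pow, sq_abs, conj_trivial]
  ring

/-- The equations left for the diagonals `u`, `w` of a central configuration
`c + u, c - u, c + B w, c - A w` after the centre `c` is eliminated. -/
structure DiagEq (A B m σ : ℝ) (u w : V) : Prop where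
  hu : u ≠ 0
  hw : w ≠ 0
  h02 : u - B • w ≠ 0
  h12 : u + B • w ≠ 0
  h03 : u + A • w ≠ 0
  h13 : u - A • w ≠ 0
  eqU : (2 * σ) • u = (m * (-4 / (2 * ‖u‖) ^ 3 + A * (1 / ‖u - B • w‖ ^ 3 + 1 / ‖u + B • w‖ ^ 3)
      + B * (1 / ‖u + A • w‖ ^ 3 + 1 / ‖u - A • w‖ ^ 3))) • u
    + (m * (A * B) * (1 / ‖u + B • w‖ ^ 3 - 1 / ‖u - B • w‖ ^ 3
      + 1 / ‖u + A • w‖ ^ 3 - 1 / ‖u - A • w‖ ^ 3)) • w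
  eqW : (2 * σ) • w = (m * (1 / ‖u - B • w‖ ^ 3 - 1 / ‖u + B • w‖ ^ 3
      - 1 / ‖u + A • w‖ ^ 3 + 1 / ‖u - A • w‖ ^ 3)) • u
    + (m * (4 / (2 * ‖w‖) ^ 3 - B * (1 / ‖u - B • w‖ ^ 3 + 1 / ‖u + B • w‖ ^ 3)
      - A * (1 / ‖u + A • w‖ ^ 3 + 1 / ‖u - A • w‖ ^ 3))) • w

/-- If `w = t u`, the ratio `t` satisfies the collinear shape equation and the size of `u` is
determined by `t`. -/
lemma DiagEq.collinear {A B m σ : ℝ} {u : V} {t : ℝ} (hm : m ≠ 0) (hσ : σ = 1 ∨ σ = -1)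
    (h : DiagEq A B m σ u (t • u)) :
    (t ≠ 0 ∧ 1 - B * t ≠ 0 ∧ 1 - A * t ≠ 0 ∧ 1 + B * t ≠ 0 ∧ 1 + A * t ≠ 0 ∧
    (1 - B * t) * (A * t - 1) / |1 - B * t| ^ 3 + (1 - A * t) * (B * t - 1) / |1 - A * t| ^ 3
      + (1 + B * t) * (A * t + 1) / |1 + B * t| ^ 3 + (1 + A * t) * (B * t + 1) / |1 + A * t| ^ 3
      = t / 2 + t / (2 * |t| ^ 3)) ∧
    ‖u‖ ^ 3 = σ * (m / 2 * (-1 / 2 + A * (1 / |1 - B * t| ^ 3 + 1 / |1 + B * t| ^ 3)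
      + B * (1 / |1 + A * t| ^ 3 + 1 / |1 - A * t| ^ 3)
      + A * B * t * (1 / |1 + B * t| ^ 3 - 1 / |1 - B * t| ^ 3
      + 1 / |1 + A * t| ^ 3 - 1 / |1 - A * t| ^ 3))) := by
  obtain ⟨hu, hw, h02, h12, h03, h13, eqU, eqW⟩ := h
  have e1 : ∀ k : ℝ, u - k • t • u = (1 - k * t) • u := fun k => by module
  have e2 : ∀ k : ℝ, u + k • t • u = (1 + k * t) • u := fun k => by module
  simp only [e1, e2] at h02 h12 h03 h13 eqU eqW
  have ht : t ≠ 0 := (smul_ne_zero_iff.1 hw).1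
  have hx := (smul_ne_zero_iff.1 h02).1
  have hz := (smul_ne_zero_iff.1 h12).1
  have hv := (smul_ne_zero_iff.1 h03).1
  have hy := (smul_ne_zero_iff.1 h13).1
  simp only [smul_smul, ← add_smul] at eqU eqW
  have eU := smul_left_injective ℝ hu eqU
  have eW := smul_left_injective ℝ hu eqW
  simp only [norm_smul, Real.norm_eq_abs, mul_pow] at eU eW
  have ha : ‖u‖ ^ 3 ≠ 0 := pow_ne_zero 3 (norm_ne_zero_iff.2 hu)
  have X0 := pow_ne_zero 3 (abs_ne_zero.2 hx)
  have Y0 := pow_ne_zero 3 (abs_ne_zero.2 hy)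
  have Z0 := pow_ne_zero 3 (abs_ne_zero.2 hz)
  have W0 := pow_ne_zero 3 (abs_ne_zero.2 hv)
  have T0 := pow_ne_zero 3 (abs_ne_zero.2 ht)
  have hσ2 : σ * σ = 1 := by rcases hσ with rfl | rfl <;> norm_num
  generalize ‖u‖ ^ 3 = a at *
  generalize |1 - B * t| ^ 3 = X at *
  generalize |1 - A * t| ^ 3 = Y at *
  generalize |1 + B * t| ^ 3 = Z at *
  generalize |1 + A * t| ^ 3 = W at *
  generalize |t| ^ 3 = T at *
  simp only [div_eq_mul_inv, mul_inv, one_mul] at eU eW ⊢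
  have ha' : a⁻¹ * a = 1 := inv_mul_cancel₀ ha
  refine ⟨⟨ht, hx, hy, hz, hv, ?_⟩, ?_⟩
  · have h1 : m * a⁻¹ ≠ 0 := mul_ne_zero hm (inv_ne_zero ha)
    apply mul_left_cancel₀ h1
    linear_combination eW - t * eU
  · linear_combination (σ * a / 2) * eU - a * hσ2 + (σ * m / 2 *
      (-1 / 2 + A * (X⁻¹ + Z⁻¹) + B * (W⁻¹ + Y⁻¹) + A * B * t * (Z⁻¹ - X⁻¹ + W⁻¹ - Y⁻¹))) * ha'

lemma coeff_of_linearIndependent {u w : V} (hli : LinearIndependent ℝ ![u, w]) {a b c d : ℝ}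
    (h : a • u + b • w = c • u + d • w) : a = c ∧ b = d := by
  rw [LinearIndependent.pair_iff] at hli
  have := hli (a - c) (b - d) (by linear_combination (norm := module) h)
  exact ⟨sub_eq_zero.1 this.1, sub_eq_zero.1 this.2⟩

/-- If `u` and `w` are independent they are orthogonal: the coefficient of `w` in the equation for
`u` is strictly monotone in `⟪u, w⟫` and vanishes when `⟪u, w⟫ = 0`. -/
lemma DiagEq.orthogonal {A B m σ : ℝ} {u w : V} (hm : m ≠ 0) (hA : 0 < A) (hB : 0 < B)
    (hli : LinearIndependent ℝ ![u, w]) (h : DiagEq A B m σ u w) : inner ℝ u w = 0 := by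
  obtain ⟨hu, hw, h02, h12, h03, h13, eqU, eqW⟩ := h
  have h0 := (coeff_of_linearIndependent hli
    ((show (2 * σ) • u + (0 : ℝ) • w = _ by rw [zero_smul, add_zero]).trans eqU)).2.symm
  have hD := (mul_eq_zero.1 h0).resolve_left (by positivity)
  have hsub : ∀ k : ℝ, ‖u - k • w‖ ^ 2 = ‖u‖ ^ 2 - 2 * k * inner ℝ u w + k ^ 2 * ‖w‖ ^ 2 := by
    intro k
    rw [norm_sub_sq_real, inner_smul_right, norm_smul, mul_pow, Real.norm_eq_abs, sq_abs]
    ring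
  have hadd : ∀ k : ℝ, ‖u + k • w‖ ^ 2 = ‖u‖ ^ 2 + 2 * k * inner ℝ u w + k ^ 2 * ‖w‖ ^ 2 := by
    intro k
    rw [norm_add_sq_real, inner_smul_right, norm_smul, mul_pow, Real.norm_eq_abs, sq_abs]
    ring
  have mono : ∀ p q : V, p ≠ 0 → ‖p‖ ^ 2 < ‖q‖ ^ 2 → 1 / ‖q‖ ^ 3 < 1 / ‖p‖ ^ 3 := by
    intro p q hp hpq
    have := norm_pos_iff.2 hp
    have h' : ‖p‖ < ‖q‖ := lt_of_pow_lt_pow_left₀ 2 (norm_nonneg _) hpq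
    exact one_div_lt_one_div_of_lt (by positivity) (by gcongr)
  rcases lt_trichotomy (inner ℝ u w) 0 with hs | hs | hs
  · have h1 := mono _ _ h12 (show ‖u + B • w‖ ^ 2 < ‖u - B • w‖ ^ 2 by
      rw [hsub, hadd]; nlinarith [mul_neg_of_pos_of_neg hB hs])
    have h2 := mono _ _ h03 (show ‖u + A • w‖ ^ 2 < ‖u - A • w‖ ^ 2 by
      rw [hsub, hadd]; nlinarith [mul_neg_of_pos_of_neg hA hs])
    linarith
  · exact hs
  · have h1 := mono _ _ h02 (show ‖u - B • w‖ ^ 2 < ‖u + B • w‖ ^ 2 by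
      rw [hsub, hadd]; nlinarith [mul_pos hB hs])
    have h2 := mono _ _ h13 (show ‖u - A • w‖ ^ 2 < ‖u + A • w‖ ^ 2 by
      rw [hsub, hadd]; nlinarith [mul_pos hA hs])
    linarith

/-- If `u` and `w` are independent, the ratio `t = ‖w‖ / ‖u‖` satisfies the kite shape equation and
the size of `u` is determined by `t`. -/
lemma DiagEq.kite {A B m σ : ℝ} {u w : V} (hm : m ≠ 0) (hA : 0 < A) (hB : 0 < B)
    (hAB : A + B = 2) (hσ : σ = 1 ∨ σ = -1)
    (hli : LinearIndependent ℝ ![u, w]) (h : DiagEq A B m σ u w) {t : ℝ} (ht : t = ‖w‖ / ‖u‖) :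
    (0 < t ∧ 1 / √(1 + B ^ 2 * t ^ 2) ^ 3 + 1 / √(1 + A ^ 2 * t ^ 2) ^ 3 = 1 / 8 + 1 / (8 * t ^ 3)) ∧
    ‖u‖ ^ 3 = σ * (m * (-1 / 4 + A * (1 / √(1 + B ^ 2 * t ^ 2) ^ 3)
      + B * (1 / √(1 + A ^ 2 * t ^ 2) ^ 3))) := by
  have hs := h.orthogonal hm hA hB hli
  obtain ⟨hu, hw, h02, h12, h03, h13, eqU, eqW⟩ := h
  have ha := norm_pos_iff.2 hu
  have hb := norm_pos_iff.2 hw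
  have htpos : 0 < t := ht ▸ div_pos hb ha
  have hwt : ‖w‖ = t * ‖u‖ := by rw [ht]; field_simp
  have hadd : ∀ k : ℝ, ‖u + k • w‖ = √(1 + k ^ 2 * t ^ 2) * ‖u‖ := by
    intro k
    have := norm_comb u w 1 k
    rw [one_smul, hs, hwt] at this
    rw [this, show (1 : ℝ) ^ 2 * ‖u‖ ^ 2 + 2 * (1 * k) * 0 + k ^ 2 * (t * ‖u‖) ^ 2
      = (1 + k ^ 2 * t ^ 2) * ‖u‖ ^ 2 by ring, Real.sqrt_mul (by positivity),
      Real.sqrt_sq ha.le]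
  have hsub : ∀ k : ℝ, ‖u - k • w‖ = √(1 + k ^ 2 * t ^ 2) * ‖u‖ := by
    intro k
    have := hadd (-k)
    rwa [neg_smul, ← sub_eq_add_neg, neg_sq] at this
  have eU := (coeff_of_linearIndependent hli
    ((show (2 * σ) • u + (0 : ℝ) • w = _ by rw [zero_smul, add_zero]).trans eqU)).1
  have eW := (coeff_of_linearIndependent hli
    ((show (0 : ℝ) • u + (2 * σ) • w = _ by rw [zero_smul, zero_add]).trans eqW)).2
  simp only [hadd, hsub, hwt, mul_pow] at eU eW
  have hP : √(1 + B ^ 2 * t ^ 2) ^ 3 ≠ 0 := by positivity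
  have hQ : √(1 + A ^ 2 * t ^ 2) ^ 3 ≠ 0 := by positivity
  have ha3 : ‖u‖ ^ 3 ≠ 0 := by positivity
  have ht3 : t ^ 3 ≠ 0 := by positivity
  have hσ2 : σ * σ = 1 := by rcases hσ with rfl | rfl <;> norm_num
  obtain rfl : B = 2 - A := by linarith
  refine ⟨⟨htpos, ?_⟩, ?_⟩
  all_goals
    generalize √(1 + (2 - A) ^ 2 * t ^ 2) ^ 3 = P at *
    generalize √(1 + A ^ 2 * t ^ 2) ^ 3 = Q at *
    generalize ‖u‖ ^ 3 = a at *
    generalize t ^ 3 = T at *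
    have ha' : a⁻¹ * a = 1 := inv_mul_cancel₀ ha3
    simp only [div_eq_mul_inv, mul_inv, one_mul] at eU eW ⊢
  · have h1 : m * a⁻¹ ≠ 0 := mul_ne_zero hm (inv_ne_zero ha3)
    apply mul_left_cancel₀ h1
    linear_combination (eW - eU) / 4
  · linear_combination (σ * a / 2) * eU - a * hσ2 + (σ * m *
      (-1 / 4 + A * P⁻¹ + (2 - A) * Q⁻¹)) * ha'

lemma finite_gram {A B m : ℝ} (hm : m ≠ 0) (hA : 0 < A) (hB : 0 < B) (hAB : A + B = 2) :
    {g : ℝ × ℝ × ℝ | ∃ (σ : ℝ) (u w : V), (σ = 1 ∨ σ = -1) ∧ DiagEq A B m σ u w ∧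
      g = (‖u‖ ^ 2, ‖w‖ ^ 2, inner ℝ u w)}.Finite := by
  have hkite := finite_size_shape (finite_kite A B) fun t =>
    m * (-1 / 4 + A * (1 / √(1 + B ^ 2 * t ^ 2) ^ 3) + B * (1 / √(1 + A ^ 2 * t ^ 2) ^ 3))
  have hcol := finite_size_shape (finite_collinear A B) fun t =>
    m / 2 * (-1 / 2 + A * (1 / |1 - B * t| ^ 3 + 1 / |1 + B * t| ^ 3)
      + B * (1 / |1 + A * t| ^ 3 + 1 / |1 - A * t| ^ 3)
      + A * B * t * (1 / |1 + B * t| ^ 3 - 1 / |1 - B * t| ^ 3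
      + 1 / |1 + A * t| ^ 3 - 1 / |1 - A * t| ^ 3))
  refine ((hkite.image fun q : ℝ × ℝ => (q.1 ^ 2, (q.2 * q.1) ^ 2, (0 : ℝ))).union
    (hcol.image fun q : ℝ × ℝ => (q.1 ^ 2, (|q.2| * q.1) ^ 2, q.2 * q.1 ^ 2))).subset ?_
  rintro _ ⟨σ, u, w, hσ, h, rfl⟩
  by_cases hli : LinearIndependent ℝ ![u, w]
  · left
    obtain ⟨h1, h2⟩ := h.kite hm hA hB hAB hσ hli rfl
    refine ⟨(‖u‖, ‖w‖ / ‖u‖), ⟨h1, σ, hσ, h2⟩, ?_⟩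
    have hu := norm_pos_iff.2 h.hu
    simp only [h.orthogonal hm hA hB hli, div_mul_cancel₀ _ hu.ne']
  · right
    rw [LinearIndependent.pair_iff' h.hu] at hli
    push Not at hli
    obtain ⟨t, rfl⟩ := hli
    obtain ⟨h1, h2⟩ := h.collinear hm hσ
    refine ⟨(‖u‖, t), ⟨h1, σ, hσ, h2⟩, ?_⟩
    simp only [norm_smul, Real.norm_eq_abs, inner_smul_right, real_inner_self_eq_norm_sq]

/-- Since the total mass is zero, the masses form an affine dependence of the points of a central
configuration, which puts them in the form `c + u, c - u, c + B w, c - A w`. -/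
lemma exists_diagEq {A B m σ : ℝ} (hAB : A + B = 2) (hσ : σ ≠ 0) {r : Fin 4 → V}
    (hne : ∀ j k, j ≠ k → r j ≠ r k)
    (h0 : σ • r 0 = (m / ‖r 1 - r 0‖ ^ 3) • (r 1 - r 0)
      + (-A * m / ‖r 2 - r 0‖ ^ 3) • (r 2 - r 0) + (-B * m / ‖r 3 - r 0‖ ^ 3) • (r 3 - r 0))
    (h1 : σ • r 1 = (m / ‖r 0 - r 1‖ ^ 3) • (r 0 - r 1)
      + (-A * m / ‖r 2 - r 1‖ ^ 3) • (r 2 - r 1) + (-B * m / ‖r 3 - r 1‖ ^ 3) • (r 3 - r 1))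
    (h2 : σ • r 2 = (m / ‖r 0 - r 2‖ ^ 3) • (r 0 - r 2)
      + (m / ‖r 1 - r 2‖ ^ 3) • (r 1 - r 2) + (-B * m / ‖r 3 - r 2‖ ^ 3) • (r 3 - r 2))
    (h3 : σ • r 3 = (m / ‖r 0 - r 3‖ ^ 3) • (r 0 - r 3)
      + (m / ‖r 1 - r 3‖ ^ 3) • (r 1 - r 3) + (-A * m / ‖r 2 - r 3‖ ^ 3) • (r 2 - r 3)) :
    ∃ c u w : V, DiagEq A B m σ u w ∧ r 0 = c + u ∧ r 1 = c - u ∧ r 2 = c + B • w ∧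
      r 3 = c - A • w := by
  rw [norm_sub_rev (r 0) (r 1)] at h1
  rw [norm_sub_rev (r 0) (r 2), norm_sub_rev (r 1) (r 2)] at h2
  rw [norm_sub_rev (r 0) (r 3), norm_sub_rev (r 1) (r 3), norm_sub_rev (r 2) (r 3)] at h3
  have hbar : r 0 + r 1 = A • r 2 + B • r 3 := by
    apply smul_right_injective V hσ
    simp only
    linear_combination (norm := module) h0 + h1 - A • h2 - B • h3
  obtain rfl : B = 2 - A := by linarith
  set c : V := (1 / 2 : ℝ) • (r 0 + r 1) with hc
  set u : V := (1 / 2 : ℝ) • (r 0 - r 1) with hu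
  set w : V := (1 / 2 : ℝ) • (r 2 - r 3) with hw
  have r0 : r 0 = c + u := by rw [hc, hu]; module
  have r1 : r 1 = c - u := by rw [hc, hu]; module
  have r2 : r 2 = c + (2 - A) • w := by rw [hc, hbar, hw]; module
  have r3 : r 3 = c - A • w := by rw [hc, hbar, hw]; module
  clear_value c u w
  refine ⟨c, u, w, ?_, r0, r1, r2, r3⟩
  have d01 : r 1 - r 0 = (-2 : ℝ) • u := by rw [r0, r1]; module
  have d23 : r 3 - r 2 = (-2 : ℝ) • w := by rw [r2, r3]; module
  have d02 : r 2 - r 0 = -(u - (2 - A) • w) := by rw [r0, r2]; module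
  have d12 : r 2 - r 1 = u + (2 - A) • w := by rw [r1, r2]; module
  have d03 : r 3 - r 0 = -(u + A • w) := by rw [r0, r3]; module
  have d13 : r 3 - r 1 = u - A • w := by rw [r1, r3]; module
  have n2 : ‖(-2 : ℝ)‖ = 2 := by norm_num
  have hcross : ∀ {j k : Fin 4} {p : V}, j ≠ k → (r k - r j = p ∨ r k - r j = -p) → p ≠ 0 := by
    rintro j k p hjk h rfl
    exact hne k j hjk.symm (sub_eq_zero.1 (by simpa using h))
  have hdiag : ∀ {j k : Fin 4} {p : V}, j ≠ k → r k - r j = (-2 : ℝ) • p → p ≠ 0 := by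
    rintro j k p hjk h rfl
    exact hne k j hjk.symm (sub_eq_zero.1 (by simpa using h))
  rw [d01, d02, d03, norm_smul, n2, norm_neg, norm_neg] at h0
  rw [d01, d12, d13, norm_smul, n2, ← neg_sub (r 1), d01] at h1
  rw [d02, d12, d23, norm_smul, n2, norm_neg, ← neg_sub (r 2), d02, ← neg_sub (r 2) (r 1),
    d12] at h2
  rw [d03, d13, d23, norm_smul, n2, norm_neg, ← neg_sub (r 3), d03, ← neg_sub (r 3) (r 1),
    d13, ← neg_sub (r 3) (r 2), d23] at h3
  rw [r0] at h0
  rw [r1] at h1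
  rw [r2] at h2
  rw [r3] at h3
  refine ⟨hdiag (by decide) d01, hdiag (by decide) d23, hcross (by decide) (Or.inr d02),
    hcross (by decide) (Or.inl d12), hcross (by decide) (Or.inr d03),
    hcross (by decide) (Or.inl d13), ?_, ?_⟩
  · linear_combination (norm := module) h0 - h1
  · linear_combination (norm := module) h2 - h3

end Diagonals

/-- Finiteness for all masses `m, m, -A m, -B m` with `A, B > 0` and `A + B = 2`. -/
lemma finite_distances {m : Fin 4 → ℝ} {A B : ℝ} (hm : m 0 ≠ 0) (hA : 0 < A) (hB : 0 < B)
    (hAB : A + B = 2) (h1 : m 1 = m 0) (h2 : m 2 = -A * m 0) (h3 : m 3 = -B * m 0) :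
    (CCDistanceSet m).Finite := by
  refine ((finite_gram (V := EuclideanSpace ℝ (Fin 2)) hm hA hB hAB).image
    (gramDist A B)).subset ?_
  rintro d ⟨σ, r, hσ, hne, heq, hd⟩
  have hσ0 : σ ≠ 0 := by rcases hσ with rfl | rfl <;> norm_num
  have e0 := heq 0
  have e1 := heq 1
  have e2 := heq 2
  have e3 := heq 3
  simp only [Finset.sum_filter, Fin.sum_univ_four, h1, h2, h3] at e0 e1 e2 e3
  obtain ⟨c, u, w, h, r0, r1, r2, r3⟩ := exists_diagEq (r := r) hAB hσ0 hne
    (by simpa using e0) (by simpa using e1) (by simpa using e2) (by simpa using e3)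
  refine ⟨_, ⟨σ, u, w, hσ, h, rfl⟩, ?_⟩
  have hr : ∀ j, r j = c + (![1, -1, 0, 0] : Fin 4 → ℝ) j • u + diagCoeff A B j • w := by
    intro j
    fin_cases j
    · simp [r0, diagCoeff]
    · simp [r1, diagCoeff, sub_eq_add_neg]
    · simp [r2, diagCoeff]
    · simp [r3, diagCoeff, sub_eq_add_neg]
  ext j k
  rw [hd, hr j, hr k, gramDist, ← norm_comb]
  congr 1
  module

/-- For the two exceptional zero-total-mass families
`m₁ = m₂ = -m₃ = -m₄` and `m₁ = m₂, m₃ = -α² m₁, m₄ = -(2-α²) m₁` (with `α`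
the unique positive root of `(1-α³)² - (1+α³)²(2-α²)³ = 0`), the planar
four-body problem has finitely many central configurations. -/
theorem finiteness_for_exceptional_masses
    (m : Fin 4 → ℝ) (hm : ∀ k, m k ≠ 0)
    (α : ℝ) (hα : 0 < α ∧ (1 - α ^ 3) ^ 2 - (1 + α ^ 3) ^ 2 * (2 - α ^ 2) ^ 3 = 0)
    (hαuniq : ∀ β : ℝ, 0 < β →
      (1 - β ^ 3) ^ 2 - (1 + β ^ 3) ^ 2 * (2 - β ^ 2) ^ 3 = 0 → β = α)
    (hmass : (m 0 = m 1 ∧ m 0 = -m 2 ∧ m 0 = -m 3) ∨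
      (m 0 = m 1 ∧ m 2 = -α ^ 2 * m 0 ∧ m 3 = -(2 - α ^ 2) * m 0)) :
    (CCDistanceSet m).Finite := by
  obtain ⟨hα0, hroot⟩ := hα
  rcases hmass with ⟨h1, h2, h3⟩ | ⟨h1, h2, h3⟩
  · exact finite_distances (A := 1) (B := 1) (hm 0) one_pos one_pos (by norm_num) h1.symm
      (by linarith) (by linarith)
  · have hβ : 0 < 2 - α ^ 2 := by
      by_contra hcon
      have hle : (2 - α ^ 2) ^ 3 ≤ 0 := Odd.pow_nonpos (by decide) (not_lt.1 hcon)
      -- both terms of the defining equation are nonnegative here, so both vanish and `α = 1`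
      have hterm : (1 + α ^ 3) ^ 2 * (2 - α ^ 2) ^ 3 ≤ 0 :=
        mul_nonpos_of_nonneg_of_nonpos (sq_nonneg _) hle
      have hcube : (1 - α ^ 3) ^ 2 = 0 := by nlinarith [sq_nonneg (1 - α ^ 3)]
      have h1' : α ^ 3 = 1 := by linarith [pow_eq_zero_iff (two_ne_zero) |>.1 hcube]
      have hα1 : α = 1 := (pow_eq_one_iff_of_nonneg hα0.le (by norm_num)).1 h1'
      rw [hα1] at hcon
      norm_num at hcon
    exact finite_distances (A := α ^ 2) (B := 2 - α ^ 2) (hm 0) (by positivity) hβ (by ring)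
      h1.symm h2 h3
end

section
/- There exists a unique real number α > 0 such that (1−α³)² − (1+α³)²(2−α²)³ = 0; moreover this root satisfies 1.24 < α < 1.25. -/
/-!
Write `f α = (1 - α³)² - (1 + α³)² (2 - α²)³`. If `0 < α ≤ 1`, then `(1 - α³)² < (1 + α³)²` and
`2 - α² ≥ 1`, so `f α < 0`. On `[1, ∞)`, the sign of `f` is that of
`((α³ - 1) / (α³ + 1))² - (2 - α²)³`, which is strictly increasing since the first term increases
and the second decreases. Hence `f` changes sign once, and `f 1.24 < 0 < f 1.25` together with the
intermediate value theorem locates the root.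
-/

/-- Every positive root exceeds `1`. -/
lemma one_lt_of_root {a : ℝ} (ha : 0 < a)
    (h : (1 - a ^ 3) ^ 2 - (1 + a ^ 3) ^ 2 * (2 - a ^ 2) ^ 3 = 0) : 1 < a := by
  by_contra! h1
  have hx : 0 < a ^ 3 := by positivity
  have hu : 1 ≤ (2 - a ^ 2) ^ 3 := one_le_pow₀ (by nlinarith)
  have := mul_le_mul_of_nonneg_left hu (sq_nonneg (1 + a ^ 3))
  nlinarith

/-- On `[1, ∞)`, the polynomial stays positive once it is nonnegative: clearing denominators in
the monotonicity of `((α³ - 1) / (α³ + 1))² - (2 - α²)³`. -/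
lemma pos_of_nonneg_of_lt {a b : ℝ} (ha : 1 ≤ a) (hab : a < b)
    (h : 0 ≤ (1 - a ^ 3) ^ 2 - (1 + a ^ 3) ^ 2 * (2 - a ^ 2) ^ 3) :
    0 < (1 - b ^ 3) ^ 2 - (1 + b ^ 3) ^ 2 * (2 - b ^ 2) ^ 3 := by
  have hx : 1 ≤ a ^ 3 := one_le_pow₀ ha
  have hxy : a ^ 3 < b ^ 3 := by gcongr
  have huv : (2 - b ^ 2) ^ 3 < (2 - a ^ 2) ^ 3 :=
    (Odd.strictMono_pow (by decide : Odd 3)) (by nlinarith)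
  generalize a ^ 3 = x at *
  generalize b ^ 3 = y at *
  generalize (2 - a ^ 2) ^ 3 = u at *
  generalize (2 - b ^ 2) ^ 3 = v at *
  have h1 : ((x - 1) * (y + 1)) ^ 2 < ((y - 1) * (x + 1)) ^ 2 := by
    apply pow_lt_pow_left₀ _ _ two_ne_zero
    · nlinarith
    · exact mul_nonneg (by linarith) (by linarith)
  have h2 := mul_nonneg h (sq_nonneg (y + 1))
  have h3 : 0 < ((x + 1) * (y + 1)) ^ 2 * (u - v) :=
    mul_pos (pow_pos (mul_pos (by linarith) (by linarith)) 2) (by linarith)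
  have h4 : 0 < (x + 1) ^ 2 * ((1 - y) ^ 2 - (1 + y) ^ 2 * v) := by linarith
  exact pos_of_mul_pos_right h4 (sq_nonneg _)

/-- The equation `(1-α³)² − (1+α³)²(2-α²)³ = 0` has a unique positive real root;
moreover this root lies strictly between `1.24` and `1.25`. -/
theorem unique_positive_root_alpha :
    (∃! α : ℝ, 0 < α ∧
      (1 - α ^ 3) ^ 2 - (1 + α ^ 3) ^ 2 * (2 - α ^ 2) ^ 3 = 0) ∧
    ∀ α : ℝ, 0 < α →
      (1 - α ^ 3) ^ 2 - (1 + α ^ 3) ^ 2 * (2 - α ^ 2) ^ 3 = 0 →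
      1.24 < α ∧ α < 1.25 := by
  constructor
  · have hc : ContinuousOn
        (fun α : ℝ => (1 - α ^ 3) ^ 2 - (1 + α ^ 3) ^ 2 * (2 - α ^ 2) ^ 3)
        (Set.Icc 1.24 1.25) := by fun_prop
    obtain ⟨r, hr, hr0⟩ := intermediate_value_Icc (by norm_num) hc
      (show (0 : ℝ) ∈ Set.Icc _ _ by constructor <;> norm_num)
    have hrpos : 0 < r := lt_of_lt_of_le (by norm_num) hr.1
    refine ⟨r, ⟨hrpos, hr0⟩, ?_⟩
    rintro s ⟨hs, hs0⟩
    rcases lt_trichotomy s r with hlt | heq | hlt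
    · exact absurd hr0 (pos_of_nonneg_of_lt (one_lt_of_root hs hs0).le hlt hs0.ge).ne'
    · exact heq
    · exact absurd hs0 (pos_of_nonneg_of_lt (one_lt_of_root hrpos hr0).le hlt hr0.ge).ne'
  · intro s hs hs0
    constructor
    · by_contra! hle
      rcases hle.lt_or_eq with hlt | rfl
      · have := pos_of_nonneg_of_lt (one_lt_of_root hs hs0).le hlt hs0.ge
        norm_num at this
      · norm_num at hs0
    · by_contra! hle
      rcases hle.lt_or_eq with hlt | rfl
      · have := pos_of_nonneg_of_lt (a := 1.25) (by norm_num) hlt (by norm_num)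
        exact this.ne' hs0
      · norm_num at hs0
end

section
/- There exist exactly two real numbers t with 0 < t < 2 satisfying 1/(4 − t²)^{3/2} + 1/t³ = 2. -/
/-!
On `(0, 2)` the left-hand side equals `u ^ (-3) + t ^ (-3)` with `u = √(4 - t²)`. The upper half
circle `t ↦ √(4 - t²)` is concave and `x ↦ x ^ (-3)` is decreasing and strictly convex on `(0, ∞)`,
so the left-hand side is strictly convex (`shapeFun_strictConvexOn`) and takes the value `2` at
most twice. It exceeds `2` at `10/13` and `24/13` and is below `2` at `1`, so the intermediate
value theorem gives one root on each side of `1`. The points `10/13` and `24/13` come from the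
triple `5² + 12² = 13²`, which makes `√(4 - t²)` rational there.
-/

/-- The left-hand side of the shape equation on `(0, 2)`, with the real power written through the
square root. -/
noncomputable def shapeFun (t : ℝ) : ℝ := √(4 - t ^ 2) ^ (-3 : ℤ) + t ^ (-3 : ℤ)

lemma shapeFun_eq {t : ℝ} (h2 : 0 < 4 - t ^ 2) :
    1 / (4 - t ^ 2) ^ ((3 : ℝ) / 2) + 1 / t ^ 3 = shapeFun t := by
  have h : (4 - t ^ 2) ^ ((3 : ℝ) / 2) = √(4 - t ^ 2) ^ 3 := by
    rw [Real.sqrt_eq_rpow, ← Real.rpow_natCast (_ ^ ((1 : ℝ) / 2)), ← Real.rpow_mul h2.le]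
    norm_num
  rw [h, shapeFun, zpow_neg, zpow_neg, one_div, one_div]
  norm_cast

lemma four_sub_sq_pos {t : ℝ} (h : t ∈ Set.Ioo (0 : ℝ) 2) : 0 < 4 - t ^ 2 := by
  nlinarith [h.1, h.2]

lemma sqrt_four_sub_sq_concave {a c l m : ℝ} (ha : 0 < 4 - a ^ 2) (hc : 0 < 4 - c ^ 2)
    (hl : 0 < l) (hm : 0 < m) (hlm : l + m = 1) :
    l * √(4 - a ^ 2) + m * √(4 - c ^ 2) ≤ √(4 - (l * a + m * c) ^ 2) := by
  apply Real.le_sqrt_of_sq_le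
  have hp := Real.sq_sqrt ha.le
  have hq := Real.sq_sqrt hc.le
  set p := √(4 - a ^ 2)
  set q := √(4 - c ^ 2)
  obtain rfl : m = 1 - l := by linarith
  -- The defect in the concavity inequality is a nonnegative multiple of a squared distance.
  have key : 4 - (l * a + (1 - l) * c) ^ 2 - (l * p + (1 - l) * q) ^ 2
      = l * (1 - l) * ((p - q) ^ 2 + (a - c) ^ 2) := by
    linear_combination (-l) * hp + (-(1 - l)) * hq
  have : 0 ≤ l * (1 - l) * ((p - q) ^ 2 + (a - c) ^ 2) := by positivity
  linarith

lemma shapeFun_strictConvexOn : StrictConvexOn ℝ (Set.Ioo 0 2) shapeFun := by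
  refine ⟨convex_Ioo _ _, fun a ha c hc hac l m hl hm hlm => ?_⟩
  have hpa := Real.sqrt_pos.2 (four_sub_sq_pos ha)
  have hpc := Real.sqrt_pos.2 (four_sub_sq_pos hc)
  have hconc := sqrt_four_sub_sq_concave (four_sub_sq_pos ha) (four_sub_sq_pos hc) hl hm hlm
  have hcvx : StrictConvexOn ℝ (Set.Ioi 0) (fun x : ℝ => x ^ (-3 : ℤ)) :=
    strictConvexOn_zpow (by norm_num) (by norm_num)
  have h1 := hcvx.2 (Set.mem_Ioi.2 ha.1) (Set.mem_Ioi.2 hc.1) hac hl hm hlm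
  have h2 := hcvx.convexOn.2 (Set.mem_Ioi.2 hpa) (Set.mem_Ioi.2 hpc) hl.le hm.le hlm
  simp only [smul_eq_mul, shapeFun] at h1 h2 ⊢
  have h3 : √(4 - (l * a + m * c) ^ 2) ^ (-3 : ℤ)
      ≤ (l * √(4 - a ^ 2) + m * √(4 - c ^ 2)) ^ (-3 : ℤ) := by
    rw [zpow_neg, zpow_neg]
    apply inv_anti₀ (by positivity)
    exact zpow_le_zpow_left₀ (by norm_num) (by positivity) hconc
  linarith

lemma shapeFun_continuousOn : ContinuousOn shapeFun (Set.Ioo 0 2) := by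
  intro t ht
  have h := (Real.sqrt_pos.2 (four_sub_sq_pos ht)).ne'
  have h1 : ContinuousAt (fun t : ℝ => √(4 - t ^ 2)) t := by fun_prop
  exact ((h1.zpow₀ _ (Or.inl h)).add
    (continuousAt_id.zpow₀ _ (Or.inl ht.1.ne'))).continuousWithinAt

/-- A strictly convex function takes each value at most twice. -/
lemma StrictConvexOn.not_three_eq {s : Set ℝ} {f : ℝ → ℝ} (hf : StrictConvexOn ℝ s f)
    {a b c v : ℝ} (ha : a ∈ s) (hc : c ∈ s) (hab : a < b) (hbc : b < c)
    (hfa : f a = v) (hfb : f b = v) (hfc : f c = v) : False := by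
  have hb : b ∈ openSegment ℝ a c := by
    rw [openSegment_eq_Ioo (hab.trans hbc)]
    exact ⟨hab, hbc⟩
  have := hf.lt_on_openSegment ha hc (hab.trans hbc).ne hb
  simp [hfa, hfb, hfc] at this

/-- There are exactly two real numbers `t ∈ (0, 2)` with
`1/(4 − t²)^{3/2} + 1/t³ = 2`. -/
theorem two_roots_of_shape_equation :
    {t : ℝ | 0 < t ∧ t < 2 ∧
      1 / (4 - t ^ 2) ^ ((3 : ℝ) / 2) + 1 / t ^ 3 = 2}.encard = 2 := by
  have s1 : √(4 - (10 / 13 : ℝ) ^ 2) = 24 / 13 := by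
    rw [Real.sqrt_eq_iff_mul_self_eq] <;> norm_num
  have s2 : √(4 - (24 / 13 : ℝ) ^ 2) = 10 / 13 := by
    rw [Real.sqrt_eq_iff_mul_self_eq] <;> norm_num
  have v1 : 2 < shapeFun (10 / 13) := by
    rw [shapeFun, s1]; norm_num
  have v2 : 2 < shapeFun (24 / 13) := by
    rw [shapeFun, s2]; norm_num
  have v0 : shapeFun 1 < 2 := by
    have h : (1 : ℝ) < √(4 - 1 ^ 2) := Real.lt_sqrt_of_sq_lt (by norm_num)
    have h' : √(4 - 1 ^ 2 : ℝ) ^ (-3 : ℤ) < 1 := zpow_lt_one_of_neg₀ h (by norm_num)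
    rw [shapeFun, one_zpow]
    linarith
  obtain ⟨a, ha, hfa⟩ := intermediate_value_Ioo' (by norm_num : (10 / 13 : ℝ) ≤ 1)
    (shapeFun_continuousOn.mono fun x hx => ⟨by linarith [hx.1], by linarith [hx.2]⟩) ⟨v0, v1⟩
  obtain ⟨b, hb, hfb⟩ := intermediate_value_Ioo (by norm_num : (1 : ℝ) ≤ 24 / 13)
    (shapeFun_continuousOn.mono fun x hx => ⟨by linarith [hx.1], by linarith [hx.2]⟩) ⟨v0, v2⟩
  have ha' : a ∈ Set.Ioo (0 : ℝ) 2 := ⟨by linarith [ha.1], by linarith [ha.2]⟩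
  have hb' : b ∈ Set.Ioo (0 : ℝ) 2 := ⟨by linarith [hb.1], by linarith [hb.2]⟩
  have hab : a < b := ha.2.trans hb.1
  rw [Set.encard_eq_two]
  refine ⟨a, b, hab.ne, ?_⟩
  ext t
  simp only [Set.mem_ofPred_eq, Set.mem_insert_iff, Set.mem_singleton_iff]
  constructor
  · rintro ⟨h0, h2, h⟩
    have ht : t ∈ Set.Ioo (0 : ℝ) 2 := ⟨h0, h2⟩
    rw [shapeFun_eq (four_sub_sq_pos ht)] at h
    by_contra! hne
    have hf := shapeFun_strictConvexOn
    rcases lt_or_gt_of_ne hne.1 with hta | hat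
    · exact hf.not_three_eq ht hb' hta hab h hfa hfb
    · rcases lt_or_gt_of_ne hne.2 with htb | hbt
      · exact hf.not_three_eq ha' hb' hat htb hfa h hfb
      · exact hf.not_three_eq ha' ht hab hbt hfa hfb h
  · rintro (rfl | rfl)
    · exact ⟨ha'.1, ha'.2, (shapeFun_eq (four_sub_sq_pos ha')).trans hfa⟩
    · exact ⟨hb'.1, hb'.2, (shapeFun_eq (four_sub_sq_pos hb')).trans hfb⟩
end

section
/- Let μ₂, μ₄ > 0 and set μ₃ = μ₂μ₄. Then there exist signs σ₁, σ₂ ∈ {−1, 1} with (μ₃³ + σ₁μ₄³) + σ₂μ₂³(μ₃³ − σ₁μ₄³) = 0 if and only if μ₂³ = √2 + 1 or μ₂³ = √2 − 1. -/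
/-! Put `x = μ₂³ > 0`. Substituting `μ₃ = μ₂μ₄` and dividing by `μ₄³ > 0` turns the equation into
`x + σ₁ + σ₂ x (x - σ₁) = 0`. When `σ₁ = σ₂` this is `x² + 1 = 0` up to sign, which is impossible;
for `(σ₁, σ₂) = (1, -1)` it is `(x - 1)² = 2` and for `(-1, 1)` it is `(x + 1)² = 2`, whose only
positive roots are `√2 + 1` and `√2 - 1` respectively. -/

/-- Under the Diagram II relation `μ₃ = μ₂μ₄`, membership in the Diagram I mass
set `𝒱_{IB}[12,34]` (for some choice of square-root branches `σ₁, σ₂ = ±1`)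
holds iff `μ₂³ = √2 + 1` or `μ₂³ = √2 − 1`. -/
theorem diagram_II_and_IB_iff_sqrt_two
    (μ₂ μ₄ : ℝ) (hμ₂ : 0 < μ₂) (hμ₄ : 0 < μ₄) (μ₃ : ℝ) (hμ₃ : μ₃ = μ₂ * μ₄) :
    (∃ σ₁ σ₂ : ℝ, (σ₁ = -1 ∨ σ₁ = 1) ∧ (σ₂ = -1 ∨ σ₂ = 1) ∧
      (μ₃ ^ 3 + σ₁ * μ₄ ^ 3) + σ₂ * μ₂ ^ 3 * (μ₃ ^ 3 - σ₁ * μ₄ ^ 3) = 0) ↔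
    (μ₂ ^ 3 = Real.sqrt 2 + 1 ∨ μ₂ ^ 3 = Real.sqrt 2 - 1) := by
  subst hμ₃
  have hx : 0 < μ₂ ^ 3 := by positivity
  have hy : μ₄ ^ 3 ≠ 0 := by positivity
  rw [mul_pow]
  generalize μ₂ ^ 3 = x at *
  generalize μ₄ ^ 3 = y at *
  have hs : Real.sqrt 2 ^ 2 = 2 := Real.sq_sqrt (by norm_num)
  have hs1 : 1 < Real.sqrt 2 := Real.lt_sqrt_of_sq_lt (by norm_num)
  constructor
  · rintro ⟨σ₁, σ₂, h₁, h₂, h⟩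
    have key : x + σ₁ + σ₂ * x * (x - σ₁) = 0 :=
      (mul_eq_zero.mp (by linear_combination h :
        y * (x + σ₁ + σ₂ * x * (x - σ₁)) = 0)).resolve_left hy
    rcases h₁ with rfl | rfl <;> rcases h₂ with rfl | rfl
    · nlinarith
    · right
      have hf : (x + 1 - Real.sqrt 2) * (x + 1 + Real.sqrt 2) = 0 := by
        linear_combination key - hs
      rcases mul_eq_zero.mp hf with h | h <;> linarith
    · left
      have hf : (x - 1 - Real.sqrt 2) * (x - 1 + Real.sqrt 2) = 0 := by
        linear_combination -key - hs
      -- the other root `1 - √2` is negative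
      rcases mul_eq_zero.mp hf with h | h <;> linarith
    · nlinarith
  · rintro (rfl | rfl)
    · exact ⟨1, -1, Or.inr rfl, Or.inl rfl, by linear_combination -y * hs⟩
    · exact ⟨-1, 1, Or.inl rfl, Or.inr rfl, by linear_combination y * hs⟩
end

section
/- Let α be the unique positive root of (1−α³)² − (1+α³)²(2−α²)³ = 0. Suppose μ₃, μ₄ > 0 satisfy μ₃² + μ₄² = 2 and μ₃ ≠ 1, μ₄ ≠ 1, μ₃ ≠ μ₄, and suppose there exist signs σ₁, σ₂, σ₃, σ₄ ∈ {−1, 1} with 1 + σ₁μ₃³ = σ₂μ₄³(1 − σ₁μ₃³) and 1 + σ₃μ₄³ = σ₄μ₃³(1 − σ₃μ₄³). Then {μ₃², μ₄²} = {α², 2 − α²}. -/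
/-!
Write `x = μ₃³`, `y = μ₄³`. If the first branch sign is `σ₁ = -1`, squaring the first constraint
and substituting `μ₄² = 2 - μ₃²` shows that `μ₃` is a positive root of the defining polynomial,
so `μ₃ = α`. By symmetry `σ₃ = -1` gives `μ₄ = α`. If `σ₁ = σ₃ = 1`, then
`y * |1 - x| = 1 + x > |1 - x|` forces `y > 1`, and likewise `x > 1`, which contradicts
`μ₃² + μ₄² = 2`.
-/

/-- On the branch of sign `-1`, the constraint puts `a` among the roots of the polynomial
defining `α`. -/
lemma root_of_neg_branch {a b σ s : ℝ} (hsum : a ^ 2 + b ^ 2 = 2) (hσ : σ = -1)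
    (hs : s = -1 ∨ s = 1) (h : 1 + σ * a ^ 3 = s * b ^ 3 * (1 - σ * a ^ 3)) :
    (1 - a ^ 3) ^ 2 - (1 + a ^ 3) ^ 2 * (2 - a ^ 2) ^ 3 = 0 := by
  have hb : 2 - a ^ 2 = b ^ 2 := by linarith
  have hs2 : s ^ 2 = 1 := by rcases hs with rfl | rfl <;> norm_num
  have h' : 1 - a ^ 3 = s * b ^ 3 * (1 + a ^ 3) := by
    rw [hσ] at h
    linarith
  rw [hb, h']
  linear_combination b ^ 6 * (1 + a ^ 3) ^ 2 * hs2

/-- On the branch of sign `+1`, comparing `1 + a³` with `|1 - a³|` forces `b > 1`. -/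
lemma one_lt_of_pos_branch {a b σ s : ℝ} (ha : 0 < a) (hb : 0 < b) (hσ : σ = 1)
    (hs : s = -1 ∨ s = 1) (h : 1 + σ * a ^ 3 = s * b ^ 3 * (1 - σ * a ^ 3)) :
    1 < b := by
  by_contra! hb1
  have hx : 0 < a ^ 3 := by positivity
  have hy : 0 < b ^ 3 := by positivity
  have hy1 : b ^ 3 ≤ 1 := pow_le_one₀ hb.le hb1
  subst hσ
  rcases hs with rfl | rfl <;>
    nlinarith [mul_pos hx hy, mul_nonneg hx.le (sub_nonneg.2 hy1)]

/-- Identification of the exceptional zero-total-mass family: if `μ₃² + μ₄² = 2`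
with `μ₃, μ₄ > 0`, `μ₃ ≠ 1 ≠ μ₄`, `μ₃ ≠ μ₄`, and the two Diagram I constraints
hold for some square-root branches, then `{μ₃², μ₄²} = {α², 2 − α²}` for the
unique positive root `α` of `(1-α³)² − (1+α³)²(2-α²)³ = 0`. -/
theorem exceptional_family_identification
    (α : ℝ) (hα : 0 < α ∧ (1 - α ^ 3) ^ 2 - (1 + α ^ 3) ^ 2 * (2 - α ^ 2) ^ 3 = 0)
    (hαuniq : ∀ β : ℝ, 0 < β →
      (1 - β ^ 3) ^ 2 - (1 + β ^ 3) ^ 2 * (2 - β ^ 2) ^ 3 = 0 → β = α)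
    (μ₃ μ₄ : ℝ) (hμ₃ : 0 < μ₃) (hμ₄ : 0 < μ₄)
    (hsum : μ₃ ^ 2 + μ₄ ^ 2 = 2)
    (h3 : μ₃ ≠ 1) (h4 : μ₄ ≠ 1) (h34 : μ₃ ≠ μ₄)
    (hsys : ∃ σ₁ σ₂ σ₃ σ₄ : ℝ,
      (σ₁ = -1 ∨ σ₁ = 1) ∧ (σ₂ = -1 ∨ σ₂ = 1) ∧
      (σ₃ = -1 ∨ σ₃ = 1) ∧ (σ₄ = -1 ∨ σ₄ = 1) ∧
      1 + σ₁ * μ₃ ^ 3 = σ₂ * μ₄ ^ 3 * (1 - σ₁ * μ₃ ^ 3) ∧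
      1 + σ₃ * μ₄ ^ 3 = σ₄ * μ₃ ^ 3 * (1 - σ₃ * μ₄ ^ 3)) :
    (μ₃ ^ 2 = α ^ 2 ∧ μ₄ ^ 2 = 2 - α ^ 2) ∨
    (μ₃ ^ 2 = 2 - α ^ 2 ∧ μ₄ ^ 2 = α ^ 2) := by
  obtain ⟨σ₁, σ₂, σ₃, σ₄, h₁, h₂, h₃, h₄, e₁, e₂⟩ := hsys
  rcases h₁ with h₁ | h₁
  · have ha := hαuniq μ₃ hμ₃ (root_of_neg_branch hsum h₁ h₂ e₁)
    subst ha
    exact Or.inl ⟨rfl, by linarith⟩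
  rcases h₃ with h₃ | h₃
  · have hb := hαuniq μ₄ hμ₄ (root_of_neg_branch (by linarith) h₃ h₄ e₂)
    subst hb
    exact Or.inr ⟨by linarith, rfl⟩
  have hb := one_lt_of_pos_branch hμ₃ hμ₄ h₁ h₂ e₁
  have ha := one_lt_of_pos_branch hμ₄ hμ₃ h₃ h₄ e₂
  nlinarith
end
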